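/- arXiv:2503.14086 — 2 statements merged into one kernel-verified Lean document; each statement's English description precedes it below -/
import Mathlib

section
/- Suppose 𝒴 = span(ℝ^N_0, Y_1,…,Y_R) is a finite-dimensional vector subspace of L^0(Ω,𝐅_T,P) with ℝ^N_0 ⊆ 𝒴, and NCA(𝒴) holds. Then K^𝒴 is closed under componentwise P-a.s. convergence of sequences: if f_n ∈ K^𝒴 and f_n → f P-a.s. in every component, then f ∈ K^𝒴. -/
open MeasureTheory Filter Topology

namespace CollectiveArb

variable {Ω : Type*}

/-- Terminal gains `K_i` of admissible (predictable) strategies for an agent with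
filtration `F`, trading the assets indexed by `A`, over times `1,…,T`. -/
def gainsSet {J : ℕ} (F : ℕ → MeasurableSpace Ω) (T : ℕ)
    (A : Finset (Fin J)) (X : Fin J → ℕ → Ω → ℝ) : Set (Ω → ℝ) :=
  { g | ∃ H : Fin J → ℕ → Ω → ℝ,
      (∀ j ∈ A, ∀ s, 1 ≤ s → s ≤ T → Measurable[F (s - 1)] (H j s)) ∧
      g = fun ω => ∑ j ∈ A, ∑ s ∈ Finset.Icc 1 T, H j s ω * (X j s ω - X j (s - 1) ω) }

/-- No collective arbitrage for the gains sets `K` and the exchange set `Y`: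
`(K₁ × ⋯ × K_N + Y) ∩ L⁰₊ = {0}`. -/
def NCA {N : ℕ} [MeasurableSpace Ω] (P : Measure Ω)
    (K : Fin N → Set (Ω → ℝ)) (Y : Set (Fin N → Ω → ℝ)) : Prop :=
  ∀ k : Fin N → Ω → ℝ, ∀ y ∈ Y, (∀ i, k i ∈ K i) →
    (∀ i, ∀ᵐ ω ∂P, 0 ≤ k i ω + y i ω) →
    ∀ i, (fun ω => k i ω + y i ω) =ᵐ[P] fun _ => (0 : ℝ)

/-- `K^𝒴 = ⨉ᵢ (Kᵢ − L⁰₊(ℱᵢ_T)) + 𝒴`. -/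
def KY {N : ℕ} [MeasurableSpace Ω] (P : Measure Ω)
    (FT : Fin N → MeasurableSpace Ω)
    (K : Fin N → Set (Ω → ℝ)) (Y : Set (Fin N → Ω → ℝ)) : Set (Fin N → Ω → ℝ) :=
  { f | ∃ (k l y : Fin N → Ω → ℝ), y ∈ Y ∧ (∀ i, k i ∈ K i) ∧
      (∀ i, Measurable[FT i] (l i) ∧ (∀ᵐ ω ∂P, 0 ≤ l i ω)) ∧
      ∀ i, f i = fun ω => k i ω - l i ω + y i ω }

/-- `ℝ^N_0`: zero-sum deterministic exchanges, viewed as constant random vectors. -/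
def zeroSum (Ω : Type*) (N : ℕ) : Set (Fin N → Ω → ℝ) :=
  { y | ∃ x : Fin N → ℝ, (∑ i, x i) = 0 ∧ ∀ i, y i = fun _ => x i }

/-- `span(ℝ^N_0, Y_1, …, Y_R)`: the finite-dimensional space of exchanges generated
by `ℝ^N_0` and the random vectors `Ys 1, …, Ys R`. -/
def spanExch {N R : ℕ} (Ys : Fin R → Fin N → Ω → ℝ) : Set (Fin N → Ω → ℝ) :=
  { y | ∃ (x : Fin N → ℝ) (c : Fin R → ℝ), (∑ i, x i) = 0 ∧
      ∀ i, y i = fun ω => x i + ∑ r, c r * Ys r i ω }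

/-- `span(𝒴₀ ∪ {g})` for a vector subspace `𝒴₀`. -/
def spanWith {N : ℕ} (Y0 : Set (Fin N → Ω → ℝ)) (g : Fin N → Ω → ℝ) :
    Set (Fin N → Ω → ℝ) :=
  { y | ∃ w ∈ Y0, ∃ c : ℝ, ∀ i, y i = fun ω => w i ω + c * g i ω }

/-- Equivalent martingale measures `Mᵢₑ` for the assets in `A`, w.r.t. the filtration `F`. -/
def martMeasures {J : ℕ} [MeasurableSpace Ω] (P : Measure Ω)
    (F : ℕ → MeasurableSpace Ω) (T : ℕ) (A : Finset (Fin J))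
    (X : Fin J → ℕ → Ω → ℝ) : Set (Measure Ω) :=
  { Q | IsProbabilityMeasure Q ∧ Q ≪ P ∧ P ≪ Q ∧
      ∀ j ∈ A, (∀ t, t ≤ T → Integrable (X j t) Q) ∧
        ∀ s t, s ≤ t → t ≤ T → X j s =ᵐ[Q] Q[X j t | F s] }

/-- Equivalent collective martingale measures `ℳₑ(𝒴)`. -/
def MeY {J N : ℕ} [MeasurableSpace Ω] (P : Measure Ω)
    (F : Fin N → ℕ → MeasurableSpace Ω) (T : ℕ) (assets : Fin N → Finset (Fin J))
    (X : Fin J → ℕ → Ω → ℝ) (Y : Set (Fin N → Ω → ℝ)) : Set (Fin N → Measure Ω) :=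
  { Q | (∀ i, Q i ∈ martMeasures P (F i) T (assets i) X) ∧
      (∀ y ∈ Y, ∀ i, Integrable (y i) (Q i)) ∧
      ∀ y ∈ Y, (∑ i, ∫ ω, y i ω ∂(Q i)) ≤ 0 }

/-- `ℳ^φ_e(𝒴) = {Q ∈ ℳₑ(𝒴) : E_{Qⁱ}[|φⁱ|] < ∞ ∀ i}`. -/
def MeYphi {J N : ℕ} [MeasurableSpace Ω] (P : Measure Ω)
    (F : Fin N → ℕ → MeasurableSpace Ω) (T : ℕ) (assets : Fin N → Finset (Fin J))
    (X : Fin J → ℕ → Ω → ℝ) (Y : Set (Fin N → Ω → ℝ))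
    (φ : Fin N → Ω → ℝ) : Set (Fin N → Measure Ω) :=
  { Q | Q ∈ MeY P F T assets X Y ∧ ∀ i, Integrable (φ i) (Q i) }

/-- Closedness of a set of random vectors under componentwise `P`-a.s. convergence
of sequences (within `L⁰(Ω, 𝐅_T, P)`). -/
def ClosedAS {N : ℕ} [MeasurableSpace Ω] (P : Measure Ω)
    (FT : Fin N → MeasurableSpace Ω) (S : Set (Fin N → Ω → ℝ)) : Prop :=
  ∀ (f : ℕ → Fin N → Ω → ℝ) (g : Fin N → Ω → ℝ),
    (∀ n, f n ∈ S) → (∀ i, Measurable[FT i] (g i)) →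
    (∀ i, ∀ᵐ ω ∂P, Tendsto (fun n => f n i ω) atTop (𝓝 (g i ω))) →
    g ∈ S

/-- Collective superhedging price `ρ^𝒴₊(f)` (with `inf ∅ = +∞`). -/
noncomputable def rhoPlus {N : ℕ} [MeasurableSpace Ω] (P : Measure Ω)
    (K : Fin N → Set (Ω → ℝ)) (Y : Set (Fin N → Ω → ℝ))
    (f : Fin N → Ω → ℝ) : EReal :=
  sInf { z : EReal | ∃ m : Fin N → ℝ, z = ((∑ i, m i : ℝ) : EReal) ∧
      ∃ k : Fin N → Ω → ℝ, (∀ i, k i ∈ K i) ∧ ∃ y ∈ Y,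
        ∀ i, ∀ᵐ ω ∂P, f i ω ≤ m i + k i ω + y i ω }

/-- Collective subhedging price `ρ^𝒴₋(f)` (with `sup ∅ = −∞`). -/
noncomputable def rhoMinus {N : ℕ} [MeasurableSpace Ω] (P : Measure Ω)
    (K : Fin N → Set (Ω → ℝ)) (Y : Set (Fin N → Ω → ℝ))
    (f : Fin N → Ω → ℝ) : EReal :=
  sSup { z : EReal | ∃ m : Fin N → ℝ, z = ((∑ i, m i : ℝ) : EReal) ∧
      ∃ k : Fin N → Ω → ℝ, (∀ i, k i ∈ K i) ∧ ∃ y ∈ Y,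
        ∀ i, ∀ᵐ ω ∂P, m i + k i ω - y i ω ≤ f i ω }

/-- `ρ^𝒴₊(f)` is attained. -/
def rhoPlusAttained {N : ℕ} [MeasurableSpace Ω] (P : Measure Ω)
    (K : Fin N → Set (Ω → ℝ)) (Y : Set (Fin N → Ω → ℝ))
    (f : Fin N → Ω → ℝ) : Prop :=
  ∃ (m : Fin N → ℝ) (k y : Fin N → Ω → ℝ), y ∈ Y ∧ (∀ i, k i ∈ K i) ∧
    (∀ i, ∀ᵐ ω ∂P, f i ω ≤ m i + k i ω + y i ω) ∧
    rhoPlus P K Y f = ((∑ i, m i : ℝ) : EReal)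

/-- `ρ^𝒴₋(f)` is attained. -/
def rhoMinusAttained {N : ℕ} [MeasurableSpace Ω] (P : Measure Ω)
    (K : Fin N → Set (Ω → ℝ)) (Y : Set (Fin N → Ω → ℝ))
    (f : Fin N → Ω → ℝ) : Prop :=
  ∃ (m : Fin N → ℝ) (k y : Fin N → Ω → ℝ), y ∈ Y ∧ (∀ i, k i ∈ K i) ∧
    (∀ i, ∀ᵐ ω ∂P, m i + k i ω - y i ω ≤ f i ω) ∧
    rhoMinus P K Y f = ((∑ i, m i : ℝ) : EReal)

/-- `f` is `𝒴`-collectively replicable: `f ∈ ℝ^N + (K₁ × ⋯ × K_N) + 𝒴` in `L⁰`. -/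
def Replicable {N : ℕ} [MeasurableSpace Ω] (P : Measure Ω)
    (K : Fin N → Set (Ω → ℝ)) (Y : Set (Fin N → Ω → ℝ))
    (f : Fin N → Ω → ℝ) : Prop :=
  ∃ (m : Fin N → ℝ) (k y : Fin N → Ω → ℝ), y ∈ Y ∧ (∀ i, k i ∈ K i) ∧
    ∀ i, f i =ᵐ[P] fun ω => m i + k i ω + y i ω



section Abstract

variable {α ι : Type*}

/-- Sets of functions that are closed under sums, under multiplication by `G`-measurable functions
and under `G`-measurable random selections from a sequence. -/
structure Stable (G : MeasurableSpace α) (D : Set (α → ℝ)) : Prop where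
  add : ∀ d ∈ D, ∀ e ∈ D, (fun ω => d ω + e ω) ∈ D
  mul : ∀ a, Measurable[G] a → ∀ d ∈ D, (fun ω => a ω * d ω) ∈ D
  select : ∀ d : ℕ → α → ℝ, (∀ n, d n ∈ D) → ∀ τ : α → ℕ, Measurable[G] τ →
    (fun ω => d (τ ω) ω) ∈ D

/-- The set of functions dominated by an element of `D` is sequentially closed under
almost-everywhere convergence with respect to the filter `l`. -/
def DomClosed (l : Filter α) (D : Set (α → ℝ)) : Prop :=
  ∀ (f : ℕ → α → ℝ) (g : α → ℝ), (∀ n, ∃ d ∈ D, ∀ᶠ ω in l, f n ω ≤ d ω) →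
    (∀ᶠ ω in l, Tendsto (fun n => f n ω) atTop (𝓝 (g ω))) → ∃ d ∈ D, ∀ᶠ ω in l, g ω ≤ d ω

/-- Every nonnegative element of `D` vanishes almost everywhere with respect to `l`. -/
def NoArb (l : Filter α) (D : Set (α → ℝ)) : Prop :=
  ∀ d ∈ D, (∀ᶠ ω in l, 0 ≤ d ω) → ∀ᶠ ω in l, d ω = 0

/-- Sums of an element of `D` and of a combination of the `ξ k`, `k ∈ S`, with
`G k`-measurable coefficients. -/
def adaptedSpan (D : Set (α → ℝ)) (G : ι → MeasurableSpace α) (ξ : ι → α → ℝ) (S : Finset ι) :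
    Set (α → ℝ) :=
  {f | ∃ h : ι → α → ℝ, (∀ k ∈ S, Measurable[G k] (h k)) ∧ ∃ d ∈ D,
    f = fun ω => ∑ k ∈ S, h k ω * ξ k ω + d ω}

theorem exists_measurable_selection [MeasurableSpace α] (p : ℕ → ℕ → α → Prop)
    (hp : ∀ k n, MeasurableSet {ω | p k n ω}) (hex : ∀ k ω, ∃ n ≥ k, p k n ω) :
    ∃ τ : ℕ → α → ℕ, (∀ k, Measurable (τ k)) ∧
      (∀ ω, Tendsto (fun k => τ k ω) atTop atTop) ∧ ∀ k ω, p k (τ k ω) ω := by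
  classical
  refine ⟨fun k ω => Nat.find (hex k ω), fun k => measurable_find (hex k) fun n => ?_,
    fun ω => tendsto_atTop_mono (fun k => (Nat.find_spec (hex k ω)).1) tendsto_id,
    fun k ω => (Nat.find_spec (hex k ω)).2⟩
  exact (MeasurableSet.const _).inter (hp k n)

theorem measurable_select {_ : MeasurableSpace α} {h : ℕ → α → ℝ} (hh : ∀ n, Measurable (h n))
    {τ : α → ℕ} (hτ : Measurable τ) : Measurable fun ω => h (τ ω) ω :=
  (measurable_from_prod_countable_left (f := fun p : α × ℕ => h p.2 p.1) hh).comp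
    (measurable_id.prodMk hτ)

/-- Where the coefficients of `ξ` in a dominating sequence are unbounded above, no arbitrage forces
`ξ` to coincide with an element of `D`. -/
theorem exists_eq_indicator_of_unbounded {G : MeasurableSpace α} {l : Filter α}
    [CountableInterFilter l] {D : Set (α → ℝ)} (hD : Stable G D) (hcl : DomClosed l D)
    {ξ : α → ℝ}
    (hNA : ∀ a, Measurable a → ∀ d ∈ D, (∀ᶠ ω in l, 0 ≤ a ω * ξ ω + d ω) →
      ∀ᶠ ω in l, a ω * ξ ω + d ω = 0)
    {f h d : ℕ → α → ℝ} {g : α → ℝ} (hh : ∀ n, Measurable (h n)) (hd : ∀ n, d n ∈ D)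
    (hf : ∀ n, ∀ᶠ ω in l, f n ω ≤ h n ω * ξ ω + d n ω)
    (hfg : ∀ᶠ ω in l, Tendsto (fun n => f n ω) atTop (𝓝 (g ω)))
    {A : Set α} (hA : MeasurableSet A) (hAh : ∀ ω ∈ A, ∀ k : ℕ, ∃ n ≥ k, (k : ℝ) + 1 ≤ h n ω) :
    ∃ e ∈ D, ∀ᶠ ω in l, A.indicator 1 ω * ξ ω = e ω := by
  classical
  obtain ⟨τ, hτ, hτt, hτp⟩ := exists_measurable_selection
    (fun k n ω => ω ∈ A → (k : ℝ) + 1 ≤ h n ω)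
    (fun k n => by
      have : {ω | ω ∈ A → (k : ℝ) + 1 ≤ h n ω} = Aᶜ ∪ {ω | (k : ℝ) + 1 ≤ h n ω} := by
        ext ω; simp [imp_iff_not_or]
      rw [this]
      exact hA.compl.union (measurableSet_le measurable_const (hh n)))
    (fun k ω => by
      by_cases hω : ω ∈ A
      · obtain ⟨n, hn, hn'⟩ := hAh ω hω k
        exact ⟨n, hn, fun _ => hn'⟩
      · exact ⟨k, le_rfl, fun h => absurd h hω⟩)
  set b : ℕ → α → ℝ := fun k => A.indicator fun ω => (h (τ k ω) ω)⁻¹ with hb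
  have hbm : ∀ k, Measurable (b k) := fun k => (measurable_select hh (hτ k)).inv.indicator hA
  have hpos : ∀ k, ∀ ω ∈ A, 0 < h (τ k ω) ω := fun k ω hω =>
    lt_of_lt_of_le (by positivity) (hτp k ω hω)
  have hb0 : ∀ k ω, 0 ≤ b k ω := fun k ω =>
    Set.indicator_nonneg (fun ω hω => (inv_pos.2 (hpos k ω hω)).le) ω
  have hbh : ∀ k ω, b k ω * h (τ k ω) ω = A.indicator 1 ω := by
    intro k ω
    by_cases hω : ω ∈ A
    · simp [hb, hω, (hpos k ω hω).ne']
    · simp [hb, hω]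
  have hbt : ∀ ω, Tendsto (fun k => b k ω) atTop (𝓝 0) := by
    intro ω
    refine squeeze_zero (hb0 · ω) (fun k => ?_) tendsto_one_div_add_atTop_nhds_zero_nat
    by_cases hω : ω ∈ A
    · simp only [hb, hω, Set.indicator_of_mem, one_div]
      exact inv_anti₀ (by positivity) (hτp k ω hω)
    · simp only [hb, hω, not_false_eq_true, Set.indicator_of_notMem]
      positivity
  obtain ⟨e, he, hle⟩ := hcl
    (fun k ω => b k ω * f (τ k ω) ω - A.indicator 1 ω * ξ ω)
    (fun ω => 0 * g ω - A.indicator 1 ω * ξ ω)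
    (fun k => ⟨_, hD.mul _ (hbm k) _ (hD.select d hd _ (hτ k)), by
      filter_upwards [eventually_countable_forall.2 hf] with ω hω
      have := mul_le_mul_of_nonneg_left (hω (τ k ω)) (hb0 k ω)
      rw [← hbh k ω]
      linarith⟩)
    (by
      filter_upwards [hfg] with ω hω
      exact ((hbt ω).mul (hω.comp (hτt ω))).sub_const _)
  have h0 := hNA (A.indicator 1) (measurable_one.indicator hA) e he
    (by filter_upwards [hle] with ω hω; linarith)
  refine ⟨_, hD.mul (fun _ => -1) measurable_const _ he, ?_⟩
  filter_upwards [h0] with ω hω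
  linarith

/-- Adjoining `ξ` with `G`-measurable coefficients to a `G`-stable set preserves closedness, as long
as the coefficients of the dominating sequence are pointwise bounded. -/
theorem exists_le_of_bounded {G : MeasurableSpace α} {l : Filter α}
    [CountableInterFilter l] {D : Set (α → ℝ)} (hD : Stable G D) (hcl : DomClosed l D)
    {ξ : α → ℝ} {f h d : ℕ → α → ℝ} {g : α → ℝ} (hh : ∀ n, Measurable (h n)) (hd : ∀ n, d n ∈ D)
    (hf : ∀ n, ∀ᶠ ω in l, f n ω ≤ h n ω * ξ ω + d n ω)
    (hfg : ∀ᶠ ω in l, Tendsto (fun n => f n ω) atTop (𝓝 (g ω)))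
    (hle : ∀ ω, IsBoundedUnder (· ≤ ·) atTop fun n => h n ω)
    (hge : ∀ ω, IsBoundedUnder (· ≥ ·) atTop fun n => h n ω) :
    ∃ a, Measurable a ∧ ∃ e ∈ D, ∀ᶠ ω in l, g ω ≤ a ω * ξ ω + e ω := by
  set a : α → ℝ := fun ω => limsup (fun n => h n ω) atTop with ha
  have ham : Measurable a := Measurable.limsup hh
  obtain ⟨τ, hτ, hτt, hτp⟩ := exists_measurable_selection
    (fun k n ω => |h n ω - a ω| < 1 / ((k : ℝ) + 1))
    (fun k n => measurableSet_lt ((hh n).sub ham).abs measurable_const)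
    (fun k ω => by
      have hε : (0 : ℝ) < 1 / ((k : ℝ) + 1) := by positivity
      have h1 : ∃ᶠ n in atTop, a ω - 1 / ((k : ℝ) + 1) < h n ω :=
        frequently_lt_of_lt_limsup (hge ω).isCoboundedUnder_le (by simp only [ha]; linarith)
      have h2 : ∀ᶠ n in atTop, h n ω < a ω + 1 / ((k : ℝ) + 1) :=
        eventually_lt_of_limsup_lt (by simp only [ha]; linarith) (hle ω)
      obtain ⟨n, hn, hn1, hn2⟩ := frequently_atTop.1 (h1.and_eventually h2) k
      exact ⟨n, hn, abs_lt.2 ⟨by linarith, by linarith⟩⟩)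
  have hat : ∀ ω, Tendsto (fun k => h (τ k ω) ω) atTop (𝓝 (a ω)) := fun ω =>
    tendsto_iff_norm_sub_tendsto_zero.2 <| squeeze_zero (fun _ => norm_nonneg _)
      (fun k => (hτp k ω).le) tendsto_one_div_add_atTop_nhds_zero_nat
  obtain ⟨e, he, hle⟩ := hcl (fun k ω => f (τ k ω) ω - h (τ k ω) ω * ξ ω)
    (fun ω => g ω - a ω * ξ ω)
    (fun k => ⟨_, hD.select d hd _ (hτ k), by
      filter_upwards [eventually_countable_forall.2 hf] with ω hω
      linarith [hω (τ k ω)]⟩)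
    (by
      filter_upwards [hfg] with ω hω
      exact (hω.comp (hτt ω)).sub ((hat ω).mul_const _))
  exact ⟨a, ham, e, he, by filter_upwards [hle] with ω hω; linarith⟩

/-- Adjoining one function with `G`-measurable coefficients to a `G`-stable closed set preserves
closedness in the absence of arbitrage. -/
theorem exists_le_of_noArb {G : MeasurableSpace α} {l : Filter α}
    [CountableInterFilter l] {D : Set (α → ℝ)} (hD : Stable G D) (hcl : DomClosed l D)
    {ξ : α → ℝ}
    (hNA : ∀ a, Measurable a → ∀ d ∈ D, (∀ᶠ ω in l, 0 ≤ a ω * ξ ω + d ω) →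
      ∀ᶠ ω in l, a ω * ξ ω + d ω = 0)
    {f h d : ℕ → α → ℝ} {g : α → ℝ} (hh : ∀ n, Measurable (h n)) (hd : ∀ n, d n ∈ D)
    (hf : ∀ n, ∀ᶠ ω in l, f n ω ≤ h n ω * ξ ω + d n ω)
    (hfg : ∀ᶠ ω in l, Tendsto (fun n => f n ω) atTop (𝓝 (g ω))) :
    ∃ a, Measurable a ∧ ∃ e ∈ D, ∀ᶠ ω in l, g ω ≤ a ω * ξ ω + e ω := by
  classical
  set U : Set α := {ω | ∀ k : ℕ, ∃ n ≥ k, (k : ℝ) + 1 ≤ h n ω} with hU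
  set V : Set α := {ω | ∀ k : ℕ, ∃ n ≥ k, (k : ℝ) + 1 ≤ -h n ω} with hV
  have hmeas : ∀ u : ℕ → α → ℝ, (∀ n, Measurable (u n)) →
      MeasurableSet {ω | ∀ k : ℕ, ∃ n ≥ k, (k : ℝ) + 1 ≤ u n ω} := by
    intro u hu
    have : {ω | ∀ k : ℕ, ∃ n ≥ k, (k : ℝ) + 1 ≤ u n ω} =
        ⋂ k : ℕ, ⋃ n : ℕ, ⋃ _ : n ≥ k, {ω | (k : ℝ) + 1 ≤ u n ω} := by
      ext ω; simp
    rw [this]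
    exact .iInter fun k => .iUnion fun n => .iUnion fun _ =>
      measurableSet_le measurable_const (hu n)
  have hUm : MeasurableSet U := hmeas h hh
  have hVm : MeasurableSet V := hmeas (fun n ω => -h n ω) fun n => (hh n).neg
  obtain ⟨e₁, he₁, hξ₁⟩ := exists_eq_indicator_of_unbounded hD hcl hNA hh hd hf hfg hUm
    fun ω hω => hω
  obtain ⟨e₂, he₂, hξ₂⟩ := exists_eq_indicator_of_unbounded hD hcl (ξ := fun ω => -ξ ω)
    (fun a ha d hd h0 => by simpa using hNA (fun ω => -a ω) ha.neg d hd (by simpa using h0))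
    (fun n => (hh n).neg) hd (by simpa using hf) hfg (hVm.diff hUm) fun ω hω => hω.1
  set B : Set α := (U ∪ V)ᶜ with hB
  have hBm : MeasurableSet B := (hUm.union hVm).compl
  set e : α → ℝ := fun ω => e₁ ω + -1 * e₂ ω with he
  have heD : e ∈ D := hD.add _ he₁ _ (hD.mul (fun _ => -1) measurable_const _ he₂)
  have hξe : ∀ᶠ ω in l, ω ∉ B → ξ ω = e ω := by
    filter_upwards [hξ₁, hξ₂] with ω h1 h2 hω
    by_cases hωU : ω ∈ U
    · simp [hωU] at h1 h2
      simp [he, h1, ← h2]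
    · have hωV : ω ∈ V := by simpa [hB, hωU] using hω
      simp [hωU, hωV] at h1 h2
      simp [he, ← h1, ← h2]
  have heB : ∀ᶠ ω in l, ∀ n, h n ω * ξ ω = B.indicator (h n) ω * ξ ω +
      Bᶜ.indicator (h n) ω * e ω := by
    filter_upwards [hξe] with ω hω n
    by_cases hωB : ω ∈ B
    · simp [hωB]
    · simp [hωB, hω hωB]
  refine exists_le_of_bounded hD hcl (f := f) (fun n => (hh n).indicator hBm)
    (fun n => hD.add _ (hD.mul _ ((hh n).indicator hBm.compl) _ heD) _ (hd n)) (fun n => ?_) hfg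
    (fun ω => ?_) (fun ω => ?_)
  · filter_upwards [hf n, heB] with ω h1 h2
    linarith [h2 n]
  · by_cases hω : ω ∈ B
    · have : ω ∉ U := fun h => hω (Or.inl h)
      simp only [hU, Set.mem_ofPred_eq, not_forall, not_exists, not_and, not_le] at this
      obtain ⟨k, hk⟩ := this
      refine ⟨k + 1, eventually_map.2 ?_⟩
      filter_upwards [eventually_ge_atTop k] with n hn
      simpa [hω] using (hk n hn).le
    · exact ⟨0, eventually_map.2 (by simp [hω])⟩
  · by_cases hω : ω ∈ B
    · have : ω ∉ V := fun h => hω (Or.inr h)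
      simp only [hV, Set.mem_ofPred_eq, not_forall, not_exists, not_and, not_le] at this
      obtain ⟨k, hk⟩ := this
      refine ⟨-(k + 1), eventually_map.2 ?_⟩
      filter_upwards [eventually_ge_atTop k] with n hn
      simp only [hω, Set.indicator_of_mem, ge_iff_le]
      linarith [hk n hn]
    · exact ⟨0, eventually_map.2 (by simp [hω])⟩

theorem Stable.adaptedSpan {G' : MeasurableSpace α} {D : Set (α → ℝ)} (hD : Stable G' D)
    {G : ι → MeasurableSpace α} {ξ : ι → α → ℝ} {S : Finset ι} (hG : ∀ k ∈ S, G' ≤ G k) :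
    Stable G' (adaptedSpan D G ξ S) where
  add := by
    rintro _ ⟨h, hh, d, hd, rfl⟩ _ ⟨h', hh', d', hd', rfl⟩
    refine ⟨fun k ω => h k ω + h' k ω, fun k hk => (hh k hk).add (hh' k hk), _,
      hD.add d hd d' hd', ?_⟩
    ext ω
    simp only [add_mul, Finset.sum_add_distrib]
    ring
  mul := by
    rintro a ha _ ⟨h, hh, d, hd, rfl⟩
    refine ⟨fun k ω => a ω * h k ω, fun k hk => (ha.mono (hG k hk) le_rfl).mul (hh k hk), _,
      hD.mul a ha d hd, ?_⟩
    ext ω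
    simp only [mul_add, Finset.mul_sum, mul_assoc]
  select := by
    intro f hf τ hτ
    choose h hh d hd hfe using hf
    refine ⟨fun k ω => h (τ ω) k ω, fun k hk => ?_, _, hD.select d hd τ hτ, ?_⟩
    · exact measurable_select (h := fun n => h n k) (fun n => hh n k hk)
        (hτ.mono (hG k hk) le_rfl)
    · ext ω
      simp only [hfe]

theorem domClosed_adaptedSpan {β : Type*} [LinearOrder β] {l : Filter α} [CountableInterFilter l]
    {D : Set (α → ℝ)} (hcl : DomClosed l D) {G : ι → MeasurableSpace α} (hD : ∀ k, Stable (G k) D)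
    (t : ι → β) (hG : ∀ i j, t i ≤ t j → G i ≤ G j) (ξ : ι → α → ℝ) (S : Finset ι)
    (hNA : NoArb l (adaptedSpan D G ξ S)) : DomClosed l (adaptedSpan D G ξ S) := by
  classical
  induction S using Finset.induction_on_min_value t with
  | empty => simpa [adaptedSpan] using hcl
  | insert i s his hmin ih =>
    have hins : ∀ a, Measurable[G i] a → ∀ d ∈ adaptedSpan D G ξ s,
        (fun ω => a ω * ξ i ω + d ω) ∈ adaptedSpan D G ξ (insert i s) := by
      rintro a ha _ ⟨h, hh, d, hd, rfl⟩
      have hne : ∀ k ∈ s, k ≠ i := fun k hk hki => his (hki ▸ hk)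
      refine ⟨Function.update h i a, fun k hk => ?_, d, hd, ?_⟩
      · rcases Finset.mem_insert.1 hk with rfl | hk
        · simpa using ha
        · simpa [hne k hk] using hh k hk
      · ext ω
        rw [Finset.sum_insert his, Finset.sum_congr rfl fun k hk => by
          rw [Function.update_of_ne (hne k hk)]]
        simp [add_assoc]
    have hsub : adaptedSpan D G ξ s ⊆ adaptedSpan D G ξ (insert i s) := fun d hd => by
      simpa using hins (fun _ => 0) measurable_const d hd
    have hcl' := ih fun d hd => hNA d (hsub hd)
    have hst : Stable (G i) (adaptedSpan D G ξ s) :=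
      (hD i).adaptedSpan fun k hk => hG i k (hmin k hk)
    intro f g hf hfg
    choose F hF hfF using hf
    choose h hh d hd hFe using hF
    obtain ⟨a, ha, e, he, hle⟩ := exists_le_of_noArb hst hcl' (ξ := ξ i)
      (fun a ha d hd => hNA _ (hins a ha d hd)) (f := f)
      (fun n => hh n i (Finset.mem_insert_self i s))
      (d := fun n ω => ∑ k ∈ s, h n k ω * ξ k ω + d n ω)
      (fun n => ⟨h n, fun k hk => hh n k (Finset.mem_insert_of_mem hk), d n, hd n, rfl⟩)
      (fun n => by
        filter_upwards [hfF n] with ω hω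
        simpa [hFe, Finset.sum_insert his, add_assoc] using hω) hfg
    exact ⟨_, hins a ha e he, hle⟩

theorem stable_zero (G : MeasurableSpace α) : Stable G {fun _ => (0 : ℝ)} where
  add := by rintro _ rfl _ rfl; simp
  mul := by rintro _ _ _ rfl; simp
  select := by intro d hd _ _; simp_all

theorem domClosed_zero (l : Filter α) [CountableInterFilter l] :
    DomClosed l {fun _ => (0 : ℝ)} := by
  intro f g hf hfg
  refine ⟨_, rfl, ?_⟩
  have hf' : ∀ n, ∀ᶠ ω in l, f n ω ≤ 0 := by simpa using hf
  filter_upwards [eventually_countable_forall.2 hf', hfg] with ω h1 h2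
  exact le_of_tendsto' h2 h1

end Abstract

section Product

variable {I : Type*}

/-- The almost-everywhere filter for `I`-tuples of functions on `Ω`, seen as functions on
`I × Ω`. -/
def aeTuple (I : Type*) {Ω : Type*} [MeasurableSpace Ω] (P : Measure Ω) : Filter (I × Ω) :=
  ⨆ i, map (Prod.mk i) (ae P)

theorem eventually_aeTuple [MeasurableSpace Ω] {P : Measure Ω} {p : I × Ω → Prop} :
    (∀ᶠ x in aeTuple I P, p x) ↔ ∀ i, ∀ᵐ ω ∂P, p (i, ω) := by
  simp [aeTuple, eventually_iSup]

instance countableInterFilter_aeTuple [MeasurableSpace Ω] (P : Measure Ω) :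
    CountableInterFilter (aeTuple I P) where
  countable_sInter_mem S hS h := by
    simp only [aeTuple, mem_iSup] at h ⊢
    exact fun i => (countable_sInter_mem hS).2 fun s hs => h s hs i

/-- The product of the sets `K i`, seen as a set of functions on `I × Ω`. -/
def tupleSet (K : I → Set (Ω → ℝ)) : Set (I × Ω → ℝ) :=
  {f | ∀ i, (fun ω => f (i, ω)) ∈ K i}

theorem stable_bot_tupleSet {K : I → Set (Ω → ℝ)} {G : I → MeasurableSpace Ω}
    (hK : ∀ i, Stable (G i) (K i)) : Stable ⊥ (tupleSet K) where
  add d hd e he i := (hK i).add _ (hd i) _ (he i)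
  mul a ha d hd i := by
    obtain ⟨c, rfl⟩ := eq_const_of_measurable_bot ha
    exact (hK i).mul _ measurable_const _ (hd i)
  select d hd τ hτ i := by
    obtain ⟨n, rfl⟩ := eq_const_of_measurable_bot hτ
    exact hd n i

theorem domClosed_tupleSet [MeasurableSpace Ω] {P : Measure Ω} {K : I → Set (Ω → ℝ)}
    (hK : ∀ i, DomClosed (ae P) (K i)) : DomClosed (aeTuple I P) (tupleSet K) := by
  intro f g hf hfg
  rw [eventually_aeTuple] at hfg
  have h : ∀ i, ∃ d ∈ K i, ∀ᵐ ω ∂P, g (i, ω) ≤ d ω := fun i =>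
    hK i (fun n ω => f n (i, ω)) _ (fun n => by
      obtain ⟨d, hd, hle⟩ := hf n
      exact ⟨_, hd i, eventually_aeTuple.1 hle i⟩) (hfg i)
  choose d hd hle using h
  exact ⟨fun x => d x.1 x.2, hd, eventually_aeTuple.2 hle⟩

end Product

theorem gainsSet_eq_adaptedSpan {J : ℕ} (F : ℕ → MeasurableSpace Ω) (T : ℕ)
    (A : Finset (Fin J)) (X : Fin J → ℕ → Ω → ℝ) :
    gainsSet F T A X = adaptedSpan {fun _ => (0 : ℝ)} (fun k : Fin J × ℕ => F (k.2 - 1))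
      (fun k ω => X k.1 k.2 ω - X k.1 (k.2 - 1) ω) (A ×ˢ Finset.Icc 1 T) := by
  ext g
  constructor
  · rintro ⟨H, hH, rfl⟩
    refine ⟨fun k => H k.1 k.2, fun k hk => ?_, _, rfl, ?_⟩
    · simp only [Finset.mem_product, Finset.mem_Icc] at hk
      exact hH _ hk.1 _ hk.2.1 hk.2.2
    · simp [Finset.sum_product]
  · rintro ⟨h, hh, _, rfl, rfl⟩
    refine ⟨fun j s => h (j, s), fun j hj s hs hsT => hh (j, s) ?_, ?_⟩
    · simp [hj, hs, hsT]
    · simp [Finset.sum_product]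

theorem stable_gainsSet {J : ℕ} {F : ℕ → MeasurableSpace Ω} (hF : Monotone F) (T : ℕ)
    (A : Finset (Fin J)) (X : Fin J → ℕ → Ω → ℝ) : Stable (F 0) (gainsSet F T A X) := by
  rw [gainsSet_eq_adaptedSpan]
  exact (stable_zero _).adaptedSpan fun k _ => hF (Nat.zero_le _)

theorem zero_mem_gainsSet {J : ℕ} (F : ℕ → MeasurableSpace Ω) (T : ℕ)
    (A : Finset (Fin J)) (X : Fin J → ℕ → Ω → ℝ) : (fun _ => (0 : ℝ)) ∈ gainsSet F T A X :=
  ⟨fun _ _ _ => 0, fun _ _ _ _ _ => measurable_const, by simp⟩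

theorem measurable_of_mem_gainsSet {J : ℕ} {F : ℕ → MeasurableSpace Ω} (hF : Monotone F) {T : ℕ}
    {A : Finset (Fin J)} {X : Fin J → ℕ → Ω → ℝ}
    (hX : ∀ j ∈ A, ∀ t, t ≤ T → Measurable[F t] (X j t)) {g : Ω → ℝ}
    (hg : g ∈ gainsSet F T A X) : Measurable[F T] g := by
  obtain ⟨H, hH, rfl⟩ := hg
  refine Finset.measurable_sum _ fun j hj => Finset.measurable_sum _ fun s hs => ?_
  obtain ⟨hs, hsT⟩ := Finset.mem_Icc.1 hs
  have hs' : s - 1 ≤ T := by lia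
  exact ((hH j hj s hs hsT).mono (hF hs') le_rfl).mul
    (((hX j hj s hsT).mono (hF hsT) le_rfl).sub ((hX j hj _ hs').mono (hF hs') le_rfl))

/-- Without arbitrage, claims dominated by terminal gains form a closed set. -/
theorem domClosed_gainsSet [MeasurableSpace Ω] {P : Measure Ω} {J : ℕ}
    {F : ℕ → MeasurableSpace Ω} (hF : Monotone F) {T : ℕ}
    {A : Finset (Fin J)} {X : Fin J → ℕ → Ω → ℝ} (hNA : NoArb (ae P) (gainsSet F T A X)) :
    DomClosed (ae P) (gainsSet F T A X) := by
  rw [gainsSet_eq_adaptedSpan] at hNA ⊢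
  exact domClosed_adaptedSpan (domClosed_zero _) (fun _ => stable_zero _)
    (fun k : Fin J × ℕ => k.2) (fun i j hij => hF (Nat.sub_le_sub_right hij 1)) _ _ hNA

/-- Generators of `spanExch Ys`: transfers of one unit from agent `i₀` to another agent, and the
exchanges `Ys r`. -/
def exchGen {N R : ℕ} (i₀ : Fin N) (Ys : Fin R → Fin N → Ω → ℝ) :
    Fin N ⊕ Fin R → Fin N × Ω → ℝ
  | .inl j, x => (Pi.single j 1 : Fin N → ℝ) x.1 - (Pi.single i₀ 1 : Fin N → ℝ) x.1
  | .inr r, x => Ys r x.1 x.2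

theorem mem_adaptedSpan_exchGen {N R : ℕ} (i₀ : Fin N) (Ys : Fin R → Fin N → Ω → ℝ)
    {K : Fin N → Set (Ω → ℝ)} {f : Fin N × Ω → ℝ} :
    f ∈ adaptedSpan (tupleSet K) (fun _ => ⊥) (exchGen i₀ Ys) Finset.univ ↔
      ∃ k : Fin N → Ω → ℝ, (∀ i, k i ∈ K i) ∧ ∃ y ∈ spanExch Ys,
        ∀ i ω, f (i, ω) = k i ω + y i ω := by
  have hgen : ∀ (x : Fin N → ℝ) (c : Fin R → ℝ) i ω,
      ∑ j, x j * exchGen i₀ Ys (.inl j) (i, ω) + ∑ r, c r * exchGen i₀ Ys (.inr r) (i, ω) =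
        (x i - (∑ j, x j) * (Pi.single i₀ 1 : Fin N → ℝ) i) + ∑ r, c r * Ys r i ω := by
    intro x c i ω
    simp [exchGen, mul_sub, Finset.sum_sub_distrib, Pi.single_apply]
  constructor
  · rintro ⟨h, hh, d, hd, rfl⟩
    have hconst : ∀ k, ∃ c, h k = fun _ => c := fun k =>
      eq_const_of_measurable_bot (hh k (Finset.mem_univ k))
    choose c hc using hconst
    refine ⟨fun i ω => d (i, ω), hd, fun i ω => (c (.inl i) - (∑ j, c (.inl j)) *
      (Pi.single i₀ 1 : Fin N → ℝ) i) + ∑ r, c (.inr r) * Ys r i ω,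
      ⟨_, fun r => c (.inr r), ?_, fun i => rfl⟩, fun i ω => ?_⟩
    · simp [Finset.sum_sub_distrib, ← Finset.mul_sum]
    · simp only [hc, Fintype.sum_sum_type]
      rw [hgen (fun j => c (.inl j)), add_comm]
  · rintro ⟨k, hk, y, ⟨x, c, hx, hy⟩, hf⟩
    refine ⟨fun j _ => Sum.elim x c j, fun _ _ => measurable_const, fun p => k p.1 p.2, hk, ?_⟩
    ext ⟨i, ω⟩
    simp only [Fintype.sum_sum_type, Sum.elim_inl, Sum.elim_inr]
    rw [hgen, hf, hy]
    simp [hx, add_comm]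

/-- closedness of K^𝒴 under a.s. convergence (Theorem THclosure). -/
theorem KY_closedAS
    {Ω : Type*} [m0 : MeasurableSpace Ω]
    (P : Measure Ω) [IsProbabilityMeasure P]
    (T J N : ℕ) (hT : 1 ≤ T) (hJ : 1 ≤ J) (hN : 1 ≤ N)
    (F : Fin N → ℕ → MeasurableSpace Ω)
    (hFmono : ∀ i, Monotone (F i))
    (hFle : ∀ i t, F i t ≤ m0)
    (hFzero : ∀ i, ∀ A : Set Ω, MeasurableSet[F i 0] A → P A = 0 ∨ P A = 1)
    (X : Fin J → ℕ → Ω → ℝ)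
    (assets : Fin N → Finset (Fin J))
    (hassets : ∀ i, (assets i).Nonempty)
    (hcover : ∀ j, ∃ i, j ∈ assets i)
    (hadapted : ∀ i, ∀ j ∈ assets i, ∀ t, t ≤ T → Measurable[F i t] (X j t))
    (R : ℕ) (Ys : Fin R → Fin N → Ω → ℝ)
    (hYsmeas : ∀ r i, Measurable[F i T] (Ys r i))
    (hNCA : NCA P (fun i => gainsSet (F i) T (assets i) X) (spanExch Ys)) :
    ClosedAS P (fun i => F i T)
      (KY P (fun i => F i T) (fun i => gainsSet (F i) T (assets i) X) (spanExch Ys)) := by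

  have hK : ∀ i, DomClosed (ae P) (gainsSet (F i) T (assets i) X) := fun i =>
    domClosed_gainsSet (hFmono i) fun d hd h0 => by
      classical
      have := hNCA (fun j => if j = i then d else fun _ => 0) (fun _ _ => 0)
        ⟨0, 0, by simp, by simp⟩
        (fun j => by
          dsimp only
          split_ifs with hj
          · exact hj ▸ hd
          · exact zero_mem_gainsSet _ _ _ _)
        (fun j => by
          split_ifs with hj
          · simpa using h0
          · simp)
        i
      simpa [EventuallyEq] using this
  have hcl := domClosed_adaptedSpan (domClosed_tupleSet hK)
    (fun _ => stable_bot_tupleSet fun i => stable_gainsSet (hFmono i) T (assets i) X)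
    (fun _ : Fin N ⊕ Fin R => (0 : ℕ)) (fun _ _ _ => le_rfl) (exchGen ⟨0, hN⟩ Ys) Finset.univ
    (fun d hd h0 => by
      obtain ⟨k, hk, y, hy, hdk⟩ := (mem_adaptedSpan_exchGen _ _).1 hd
      rw [eventually_aeTuple] at h0 ⊢
      simp only [hdk] at h0 ⊢
      exact hNCA k y hy hk h0)
  intro f g hf hg hfg
  obtain ⟨d, hd, hle⟩ := hcl (fun n x => f n x.1 x.2) (fun x => g x.1 x.2)
    (fun n => by
      obtain ⟨k, l, y, hy, hk, hl, hfk⟩ := hf n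
      refine ⟨fun x => k x.1 x.2 + y x.1 x.2,
        (mem_adaptedSpan_exchGen _ _).2 ⟨k, hk, y, hy, fun _ _ => rfl⟩,
        eventually_aeTuple.2 fun i => ?_⟩
      filter_upwards [(hl i).2] with ω hω
      simp only [hfk]
      linarith)
    (eventually_aeTuple.2 hfg)
  obtain ⟨k, hk, y, hy, hdk⟩ := (mem_adaptedSpan_exchGen _ _).1 hd
  rw [eventually_aeTuple] at hle
  simp only [hdk] at hle
  refine ⟨k, fun i ω => k i ω + y i ω - g i ω, y, hy, hk, fun i => ⟨?_, ?_⟩, fun i => ?_⟩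
  · have hyi : Measurable[F i T] (y i) := by
      obtain ⟨x, c, -, hyx⟩ := hy
      rw [hyx]
      exact measurable_const.add
        (Finset.measurable_sum _ fun r _ => (hYsmeas r i).const_mul (c r))
    exact ((measurable_of_mem_gainsSet (hFmono i) (hadapted i) (hk i)).add hyi).sub (hg i)
  · filter_upwards [hle i] with ω hω
    linarith
  · ext ω
    ring

end CollectiveArb
end

section
/- Suppose 𝒴 = span(ℝ^N_0, Y_1,…,Y_R) is a finite-dimensional vector subspace of L^0(Ω,𝐅_T,P) with ℝ^N_0 ⊆ 𝒴, and NCA(𝒴) holds. Then f ∈ L^0(Ω,𝐅_T,P) is 𝒴-collectively replicable if and only if ρ^𝒴_−(f) = ρ^𝒴_+(f). -/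
open MeasureTheory Filter Topology

namespace CollectiveArb

variable {Ω : Type*}

/-- `L` is closed under addition, multiplication by `m`-measurable functions and
`m`-measurable countable gluing. -/
structure StableModule {Ω : Type*} (m : MeasurableSpace Ω) (L : Set (Ω → ℝ)) : Prop where
  add : ∀ v ∈ L, ∀ w ∈ L, (fun ω => v ω + w ω) ∈ L
  mul : ∀ h : Ω → ℝ, Measurable[m] h → ∀ w ∈ L, (fun ω => h ω * w ω) ∈ L
  glue : ∀ w : ℕ → Ω → ℝ, (∀ n, w n ∈ L) → ∀ σ : Ω → ℕ, Measurable[m] σ →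
    (fun ω => w (σ ω) ω) ∈ L

/-- The set of functions dominated by an element of `L` is closed under convergence
along the filter `l`. -/
def DominatedClosed {Ω : Type*} (l : Filter Ω) (L : Set (Ω → ℝ)) : Prop :=
  ∀ (g : ℕ → Ω → ℝ) (g' : Ω → ℝ) (w : ℕ → Ω → ℝ), (∀ n, w n ∈ L) →
    (∀ n, ∀ᶠ ω in l, g n ω ≤ w n ω) →
    (∀ᶠ ω in l, Tendsto (fun n => g n ω) atTop (𝓝 (g' ω))) →
    ∃ w' ∈ L, ∀ᶠ ω in l, g' ω ≤ w' ω

/-- The only nonnegative element of `L` is zero. -/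
def NoNonneg {Ω : Type*} (l : Filter Ω) (L : Set (Ω → ℝ)) : Prop :=
  ∀ v ∈ L, (∀ᶠ ω in l, 0 ≤ v ω) → ∀ᶠ ω in l, v ω = 0

/-- The sums `w + h x` with `w ∈ L` and `h` measurable with respect to `m`. -/
def addMultiples {Ω : Type*} (m : MeasurableSpace Ω) (L : Set (Ω → ℝ)) (x : Ω → ℝ) :
    Set (Ω → ℝ) :=
  { v | ∃ w ∈ L, ∃ h : Ω → ℝ, Measurable[m] h ∧ v = fun ω => w ω + h ω * x ω }

/-- A bounded sequence of measurable functions has a measurably chosen convergent subsequence. -/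
lemma exists_measurable_subsequence {Ω : Type*} {m : MeasurableSpace Ω} (u : ℕ → Ω → ℝ)
    (hu : ∀ n, Measurable (u n)) (C : ℝ) (hC : ∀ n ω, |u n ω| ≤ C) :
    ∃ (σ : ℕ → Ω → ℕ) (v : Ω → ℝ), (∀ k, Measurable (σ k)) ∧ Measurable v ∧
      (∀ k ω, k ≤ σ k ω) ∧ ∀ ω, Tendsto (fun k => u (σ k ω) ω) atTop (𝓝 (v ω)) := by
  classical
  set v : Ω → ℝ := fun ω => liminf (fun n => u n ω) atTop with hv
  have hvm : Measurable v := Measurable.liminf hu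
  have hlow (ω : Ω) : IsBoundedUnder (· ≥ ·) atTop (fun n => u n ω) :=
    isBoundedUnder_of ⟨-C, fun n => (abs_le.1 (hC n ω)).1⟩
  have hupp (ω : Ω) : IsBoundedUnder (· ≤ ·) atTop (fun n => u n ω) :=
    isBoundedUnder_of ⟨C, fun n => (abs_le.1 (hC n ω)).2⟩
  have hex (k : ℕ) (ω : Ω) : ∃ n, k ≤ n ∧ |u n ω - v ω| < 1 / ((k : ℝ) + 1) := by
    have hpos : (0 : ℝ) < 1 / ((k : ℝ) + 1) := by positivity
    have h1 : ∃ᶠ n in atTop, u n ω < v ω + 1 / ((k : ℝ) + 1) :=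
      frequently_lt_of_liminf_lt (hupp ω).isCoboundedUnder_ge (by simpa [hv] using hpos)
    have h2 : ∀ᶠ n in atTop, v ω - 1 / ((k : ℝ) + 1) < u n ω :=
      eventually_lt_of_lt_liminf (by simpa [hv] using hpos) (hlow ω)
    obtain ⟨n, h3, h4, h5⟩ := (h1.and_eventually (h2.and (eventually_ge_atTop k))).exists
    exact ⟨n, h5, abs_lt.2 ⟨by linarith, by linarith⟩⟩
  refine ⟨fun k ω => Nat.find (hex k ω), v, fun k => ?_, hvm,
    fun k ω => (Nat.find_spec (hex k ω)).1, fun ω => ?_⟩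
  · refine measurable_find (hex k) fun n => ?_
    by_cases hkn : k ≤ n
    · simp only [hkn, true_and]
      exact measurableSet_lt ((hu n).sub hvm).abs measurable_const
    · simp [hkn]
  · rw [tendsto_iff_norm_sub_tendsto_zero]
    refine squeeze_zero (fun _ => norm_nonneg _) (fun k => ?_)
      (tendsto_one_div_add_atTop_nhds_zero_nat (𝕜 := ℝ))
    exact (Nat.find_spec (hex k ω)).2.le

lemma measurable_glue {Ω : Type*} {m : MeasurableSpace Ω} {h : ℕ → Ω → ℝ}
    (hh : ∀ n, Measurable (h n)) {σ : Ω → ℕ} (hσ : Measurable σ) :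
    Measurable fun ω => h (σ ω) ω :=
  (measurable_from_prod_countable_right (f := fun p : ℕ × Ω => h p.1 p.2) hh).comp
    (hσ.prodMk measurable_id)

lemma StableModule.mono {Ω : Type*} {m m' : MeasurableSpace Ω} {L : Set (Ω → ℝ)}
    (hL : StableModule m L) (hm : m' ≤ m) : StableModule m' L where
  add := hL.add
  mul h hh := hL.mul h (hh.mono hm le_rfl)
  glue w hw σ hσ := hL.glue w hw σ (hσ.mono hm le_rfl)

lemma StableModule.addMultiples {Ω : Type*} {m : MeasurableSpace Ω} {L : Set (Ω → ℝ)}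
    (hL : StableModule m L) (x : Ω → ℝ) : StableModule m (addMultiples m L x) where
  add := by
    rintro _ ⟨v, hv, h, hh, rfl⟩ _ ⟨w, hw, k, hk, rfl⟩
    exact ⟨_, hL.add v hv w hw, _, hh.add hk, by funext ω; simp only [Pi.add_apply]; ring⟩
  mul := by
    rintro k hk _ ⟨v, hv, h, hh, rfl⟩
    exact ⟨_, hL.mul k hk v hv, _, hk.mul hh, by funext ω; simp only [Pi.mul_apply]; ring⟩
  glue := by
    intro w hw σ hσ
    choose v hv h hh hvh using hw
    exact ⟨_, hL.glue v hv σ hσ, _, measurable_glue hh hσ, by funext ω; simp only [hvh]⟩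

/-- Adjoining the `m`-measurable multiples of one function preserves closedness, provided
no nontrivial nonnegative function arises. -/
theorem DominatedClosed.addMultiples {Ω : Type*} {m : MeasurableSpace Ω} {l : Filter Ω}
    [CountableInterFilter l] {L : Set (Ω → ℝ)} (hS : StableModule m L)
    (hL : DominatedClosed l L) (x : Ω → ℝ) (hNA : NoNonneg l (addMultiples m L x)) :
    DominatedClosed l (addMultiples m L x) := by
  intro g₀ g v₀ hv₀ hle₀ hlim₀
  choose w₀ hw₀ h₀ hh₀ hvw₀ using hv₀
  obtain ⟨σ, u, hσ, hu, hkσ, hlimu⟩ := exists_measurable_subsequence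
    (fun n ω => Real.arctan (h₀ n ω)) (fun n => Real.measurable_arctan.comp (hh₀ n))
    (Real.pi / 2) (fun n ω => abs_le.2
      ⟨(Real.neg_pi_div_two_lt_arctan _).le, (Real.arctan_lt_pi_div_two _).le⟩)
  set w : ℕ → Ω → ℝ := fun k ω => w₀ (σ k ω) ω
  set h : ℕ → Ω → ℝ := fun k ω => h₀ (σ k ω) ω
  have hw : ∀ k, w k ∈ L := fun k => hS.glue w₀ hw₀ _ (hσ k)
  have hh : ∀ k, Measurable (h k) := fun k => measurable_glue hh₀ (hσ k)
  have hle : ∀ᶠ ω in l, ∀ k, g₀ (σ k ω) ω ≤ w k ω + h k ω * x ω := by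
    filter_upwards [eventually_countable_forall.2 hle₀] with ω hω k
    simpa [hvw₀] using hω (σ k ω)
  have hlim : ∀ᶠ ω in l, Tendsto (fun k => g₀ (σ k ω) ω) atTop (𝓝 (g ω)) := by
    filter_upwards [hlim₀] with ω hω
    exact hω.comp (tendsto_atTop_mono (fun k => hkσ k ω) tendsto_id)
  set α : ℕ → Ω → ℝ := fun k ω => Real.cos (Real.arctan (h k ω))
  set β : ℕ → Ω → ℝ := fun k ω => Real.sin (Real.arctan (h k ω))
  have hαm : ∀ k, Measurable (α k) := fun k =>
    Real.measurable_cos.comp (Real.measurable_arctan.comp (hh k))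
  have hαpos : ∀ k ω, 0 < α k ω := fun k ω => Real.cos_arctan_pos _
  have hβα : ∀ k ω, β k ω = α k ω * h k ω := fun k ω => by
    have := Real.tan_mul_cos (hαpos k ω).ne'
    rw [Real.tan_arctan, mul_comm] at this
    exact this.symm
  have hαlim : ∀ ω, Tendsto (fun k => α k ω) atTop (𝓝 (Real.cos (u ω))) := fun ω =>
    (Real.continuous_cos.tendsto _).comp (hlimu ω)
  have hβlim : ∀ ω, Tendsto (fun k => β k ω) atTop (𝓝 (Real.sin (u ω))) := fun ω =>
    (Real.continuous_sin.tendsto _).comp (hlimu ω)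
  have hcos : ∀ ω, 0 ≤ Real.cos (u ω) := fun ω =>
    ge_of_tendsto' (hαlim ω) fun k => (hαpos k ω).le
  have hcosm : Measurable fun ω => Real.cos (u ω) := Real.measurable_cos.comp hu
  have hsinm : Measurable fun ω => Real.sin (u ω) := Real.measurable_sin.comp hu
  obtain ⟨w₁, hw₁, hle₁⟩ := hL
    (fun k ω => α k ω * g₀ (σ k ω) ω - β k ω * x ω)
    (fun ω => Real.cos (u ω) * g ω - Real.sin (u ω) * x ω) _
    (fun k => hS.mul (α k) (hαm k) (w k) (hw k))
    (fun k => by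
      filter_upwards [hle] with ω hω
      have := mul_le_mul_of_nonneg_left (hω k) (hαpos k ω).le
      rw [hβα]
      linarith)
    (by
      filter_upwards [hlim] with ω hω
      exact ((hαlim ω).mul hω).sub ((hβlim ω).mul_const _))
  set a : Ω → ℝ := fun ω => if Real.cos (u ω) = 0 then 1 else 0 with ha_def
  have ham : Measurable a :=
    Measurable.ite (hcosm (measurableSet_singleton 0)) measurable_const measurable_const
  have hzero := hNA _ ⟨_, hS.mul a ham w₁ hw₁, _, ham.mul hsinm, rfl⟩ (by
    filter_upwards [hle₁] with ω hω
    by_cases hc : Real.cos (u ω) = 0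
    · simp only [ha_def, hc, Pi.mul_apply, if_true] at hω ⊢
      linarith
    · simp [ha_def, hc])
  obtain ⟨w₂, hw₂, hle₂⟩ := hL (fun k ω => a ω * g₀ (σ k ω) ω) (fun ω => a ω * g ω) _
    (fun k => hS.add _ (hS.mul a ham (w k) (hw k)) _
      (hS.mul (fun ω => -(a ω * h k ω * Real.sin (u ω)))
        ((ham.mul (hh k)).mul hsinm).neg w₁ hw₁))
    (fun k => by
      filter_upwards [hle, hzero] with ω hω hz
      by_cases hc : Real.cos (u ω) = 0
      · simp only [ha_def, hc, Pi.mul_apply, if_true] at hz ⊢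
        have hs : Real.sin (u ω) * Real.sin (u ω) = 1 := by
          have := Real.sin_sq_add_cos_sq (u ω)
          rw [hc] at this
          linarith
        have hx : x ω = -(Real.sin (u ω) * w₁ ω) := by
          linear_combination Real.sin (u ω) * hz - x ω * hs
        have := hω k
        rw [hx] at this
        linarith
      · simp [ha_def, hc])
    (by
      filter_upwards [hlim] with ω hω
      exact hω.const_mul _)
  refine ⟨_, ⟨_, hS.add _ (hS.mul _ hcosm.inv w₁ hw₁) w₂ hw₂, _,
    hcosm.inv.mul hsinm, rfl⟩, ?_⟩
  filter_upwards [hle₁, hle₂, hzero] with ω hω₁ hω₂ hz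
  simp only [Pi.mul_apply, Pi.inv_apply] at hz ⊢
  by_cases hc : Real.cos (u ω) = 0
  · simp only [ha_def, hc, if_true] at hω₂ hz ⊢
    simp only [inv_zero]
    linarith
  · simp only [ha_def, hc, if_false] at hω₂
    have hpos : 0 < Real.cos (u ω) := lt_of_le_of_ne (hcos ω) (Ne.symm hc)
    have h1 : g ω ≤ (Real.cos (u ω))⁻¹ * (w₁ ω + Real.sin (u ω) * x ω) := by
      rw [inv_mul_eq_div, le_div_iff₀ hpos]
      linarith
    linarith

/-- Sums `∑ k ∈ S, h k * x k` with each coefficient `h k` measurable with respect to `m k`. -/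
def measurableSpan {Ω ι : Type*} (m : ι → MeasurableSpace Ω) (x : ι → Ω → ℝ) (S : Finset ι) :
    Set (Ω → ℝ) :=
  { v | ∃ h : ι → Ω → ℝ, (∀ k ∈ S, Measurable[m k] (h k)) ∧
      v = fun ω => ∑ k ∈ S, h k ω * x k ω }

lemma measurableSpan_insert {Ω ι : Type*} [DecidableEq ι] (m : ι → MeasurableSpace Ω)
    (x : ι → Ω → ℝ) {S : Finset ι} {a : ι} (ha : a ∉ S) :
    measurableSpan m x (insert a S) = addMultiples (m a) (measurableSpan m x S) (x a) := by
  ext v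
  constructor
  · rintro ⟨h, hh, rfl⟩
    refine ⟨_, ⟨h, fun k hk => hh k (Finset.mem_insert_of_mem hk), rfl⟩, h a,
      hh a (Finset.mem_insert_self a S), ?_⟩
    funext ω
    rw [Finset.sum_insert ha, add_comm]
  · rintro ⟨_, ⟨h, hh, rfl⟩, h', hh', rfl⟩
    refine ⟨Function.update h a h', fun k hk => ?_, ?_⟩
    · rcases Finset.mem_insert.1 hk with rfl | hk
      · simpa using hh'
      · rw [Function.update_of_ne (ne_of_mem_of_not_mem hk ha)]
        exact hh k hk
    · funext ω
      rw [Finset.sum_insert ha, add_comm, Function.update_self]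
      congr 1
      refine Finset.sum_congr rfl fun k hk => ?_
      rw [Function.update_of_ne (ne_of_mem_of_not_mem hk ha)]

lemma subset_addMultiples {Ω : Type*} (m : MeasurableSpace Ω) (L : Set (Ω → ℝ)) (x : Ω → ℝ) :
    L ⊆ addMultiples m L x :=
  fun w hw => ⟨w, hw, fun _ => 0, measurable_const, by simp⟩

/-- If the coefficient σ-algebras form a decreasing chain, a span without nontrivial
nonnegative elements is closed in the dominated sense. -/
theorem measurableSpan_closed_stable {Ω ι : Type*} {l : Filter Ω} [CountableInterFilter l]
    (M : ℕ → MeasurableSpace Ω) (hM : Antitone M) (d : ι → ℕ) (x : ι → Ω → ℝ) (S : Finset ι)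
    (hNA : NoNonneg l (measurableSpan (fun k => M (d k)) x S)) :
    DominatedClosed l (measurableSpan (fun k => M (d k)) x S) ∧
      ∀ t, (∀ k ∈ S, d k ≤ t) → StableModule (M t) (measurableSpan (fun k => M (d k)) x S) := by
  classical
  induction S using Finset.induction_on_max_value d with
  | empty =>
    have h0 : measurableSpan (fun k => M (d k)) x ∅ = {fun _ => (0 : ℝ)} := by
      ext v
      simp [measurableSpan]
    rw [h0]
    refine ⟨fun g g' w hw hle hlim => ⟨_, rfl, ?_⟩, fun t _ => ⟨?_, ?_, ?_⟩⟩
    · filter_upwards [eventually_countable_forall.2 hle, hlim] with ω h1 h2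
      refine le_of_tendsto' h2 fun n => ?_
      simpa [show w n = fun _ => 0 from hw n] using h1 n
    · rintro _ rfl _ rfl
      simp
    · rintro h hh _ rfl
      simp
    · intro w hw σ hσ
      have : w = fun _ _ => 0 := funext hw
      simp [this]
  | insert a S ha hmax ih =>
    rw [measurableSpan_insert _ _ ha] at hNA ⊢
    obtain ⟨hcl, hst⟩ := ih fun v hv => hNA v (subset_addMultiples _ _ _ hv)
    have hsa := hst (d a) hmax
    exact ⟨hcl.addMultiples hsa _ hNA, fun t ht =>
      (hsa.addMultiples _).mono (hM (ht a (Finset.mem_insert_self a S)))⟩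

lemma StableModule.const_mul {Ω : Type*} {L : Set (Ω → ℝ)} (hS : StableModule ⊥ L) (c : ℝ)
    {w : Ω → ℝ} (hw : w ∈ L) : (fun ω => c * w ω) ∈ L :=
  hS.mul (fun _ => c) measurable_const w hw

lemma StableModule.sub {Ω : Type*} {L : Set (Ω → ℝ)} (hS : StableModule ⊥ L)
    {v w : Ω → ℝ} (hv : v ∈ L) (hw : w ∈ L) : (fun ω => v ω - w ω) ∈ L := by
  have := hS.add v hv _ (hS.const_mul (-1) hw)
  simpa [sub_eq_add_neg] using this

/-- A function cannot be superhedged from arbitrarily low initial capital. -/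
lemma not_forall_superhedge {Ω : Type*} {l : Filter Ω} [NeBot l] {L : Set (Ω → ℝ)}
    (hS : StableModule ⊥ L) (hcl : DominatedClosed l L) (hNA : NoNonneg l L) {u : ℝ}
    (hu : 0 < u) (f : Ω → ℝ) :
    ¬ ∀ c : ℝ, ∃ v ∈ L, ∀ᶠ ω in l, f ω ≤ c * u + v ω := by
  intro h
  choose v hv hfv using fun n : ℕ => h (-((n : ℝ) + 1))
  obtain ⟨w, hw, huw⟩ := hcl (fun n ω => 1 / ((n : ℝ) + 1) * f ω + u) (fun _ => u) _
    (fun n => hS.const_mul (1 / ((n : ℝ) + 1)) (hv n))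
    (fun n => by
      filter_upwards [hfv n] with ω hω
      have hn : (0 : ℝ) < (n : ℝ) + 1 := by positivity
      have := mul_le_mul_of_nonneg_left hω (one_div_pos.2 hn).le
      have h1 : 1 / ((n : ℝ) + 1) * (-((n : ℝ) + 1) * u + v n ω)
          = -u + 1 / ((n : ℝ) + 1) * v n ω := by
        field_simp
      linarith)
    (Eventually.of_forall fun ω => by
      simpa using ((tendsto_one_div_add_atTop_nhds_zero_nat (𝕜 := ℝ)).mul_const (f ω)).add_const u)
  obtain ⟨ω, h1, h2⟩ := (huw.and (hNA w hw (huw.mono fun ω hω => hu.le.trans hω))).exists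
  linarith

/-- The infimum of the superhedging prices is attained. -/
lemma superhedge_of_forall_gt {Ω : Type*} {l : Filter Ω} {L : Set (Ω → ℝ)}
    (hcl : DominatedClosed l L) {u a : ℝ} {f : Ω → ℝ}
    (h : ∀ c, a < c → ∃ v ∈ L, ∀ᶠ ω in l, f ω ≤ c * u + v ω) :
    ∃ v ∈ L, ∀ᶠ ω in l, f ω ≤ a * u + v ω := by
  choose v hv hfv using fun n : ℕ => h (a + 1 / ((n : ℝ) + 1)) (by
    have : (0 : ℝ) < 1 / ((n : ℝ) + 1) := by positivity
    linarith)
  obtain ⟨w, hw, hfw⟩ := hcl (fun n ω => f ω - (a + 1 / ((n : ℝ) + 1)) * u)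
    (fun ω => f ω - a * u) v hv
    (fun n => (hfv n).mono fun ω hω => by linarith)
    (Eventually.of_forall fun ω => by
      simpa using (((tendsto_one_div_add_atTop_nhds_zero_nat (𝕜 := ℝ)).const_add a).mul_const
        u).const_sub (f ω))
  exact ⟨w, hw, hfw.mono fun ω hω => by linarith⟩

/-- Subhedging `f` amounts to superhedging `-f`. -/
lemma subhedge_iff_superhedge_neg {Ω : Type*} {l : Filter Ω} {L : Set (Ω → ℝ)}
    (hS : StableModule ⊥ L) (u c : ℝ) (f : Ω → ℝ) :
    (∃ v ∈ L, ∀ᶠ ω in l, c * u + v ω ≤ f ω) ↔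
      ∃ v ∈ L, ∀ᶠ ω in l, -f ω ≤ -c * u + v ω := by
  constructor <;> rintro ⟨v, hv, h⟩ <;>
    exact ⟨_, hS.const_mul (-1) hv, h.mono fun ω hω => by linarith⟩

/-- For a closed vector space of gains without arbitrage, the sub- and superhedging prices
agree exactly for the replicable functions. -/
theorem sSup_subhedge_eq_sInf_superhedge_iff {Ω : Type*} {l : Filter Ω} [NeBot l]
    {L : Set (Ω → ℝ)} (hS : StableModule ⊥ L) (hcl : DominatedClosed l L)
    (hNA : NoNonneg l L) {u : ℝ} (hu : 0 < u) (f : Ω → ℝ) :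
    sSup { z : EReal | ∃ c : ℝ, z = c ∧ ∃ v ∈ L, ∀ᶠ ω in l, c * u + v ω ≤ f ω } =
      sInf { z : EReal | ∃ c : ℝ, z = c ∧ ∃ v ∈ L, ∀ᶠ ω in l, f ω ≤ c * u + v ω } ↔
    ∃ c : ℝ, ∃ v ∈ L, ∀ᶠ ω in l, f ω = c * u + v ω := by
  constructor
  · intro heq
    have hsup : ∀ c : ℝ, sInf { z : EReal | ∃ c : ℝ, z = c ∧
        ∃ v ∈ L, ∀ᶠ ω in l, f ω ≤ c * u + v ω } < c →
        ∃ v ∈ L, ∀ᶠ ω in l, f ω ≤ c * u + v ω := by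
      intro c hc
      obtain ⟨_, ⟨c', rfl, v, hv, hfv⟩, hlt⟩ := sInf_lt_iff.1 hc
      have hlt' : c' < c := EReal.coe_lt_coe_iff.1 hlt
      exact ⟨v, hv, hfv.mono fun ω hω => by nlinarith⟩
    have hsub : ∀ c : ℝ, (c : EReal) < sSup { z : EReal | ∃ c : ℝ, z = c ∧
        ∃ v ∈ L, ∀ᶠ ω in l, c * u + v ω ≤ f ω } →
        ∃ v ∈ L, ∀ᶠ ω in l, -f ω ≤ -c * u + v ω := by
      intro c hc
      rw [← subhedge_iff_superhedge_neg hS]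
      obtain ⟨_, ⟨c', rfl, v, hv, hfv⟩, hlt⟩ := lt_sSup_iff.1 hc
      have hlt' : c < c' := EReal.coe_lt_coe_iff.1 hlt
      exact ⟨v, hv, hfv.mono fun ω hω => by nlinarith⟩
    rw [heq] at hsub
    generalize sInf { z : EReal | ∃ c : ℝ, z = c ∧
        ∃ v ∈ L, ∀ᶠ ω in l, f ω ≤ c * u + v ω } = a at hsup hsub
    induction a with
    | bot =>
      exact (not_forall_superhedge hS hcl hNA hu f fun c => hsup c (EReal.bot_lt_coe c)).elim
    | top =>
      exact (not_forall_superhedge hS hcl hNA hu (fun ω => -f ω) fun c => by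
        simpa using hsub (-c) (EReal.coe_lt_top _)).elim
    | coe a =>
      obtain ⟨v, hv, hfv⟩ := superhedge_of_forall_gt hcl
        fun c hc => hsup c (EReal.coe_lt_coe_iff.2 hc)
      obtain ⟨w, hw, hfw⟩ := superhedge_of_forall_gt (a := -a) (f := fun ω => -f ω) hcl
        fun c hc => by
          simpa using hsub (-c) (EReal.coe_lt_coe_iff.2 (by linarith))
      have h0 := hNA _ (hS.add v hv w hw) (by
        filter_upwards [hfv, hfw] with ω h1 h2
        linarith)
      refine ⟨a, v, hv, ?_⟩
      filter_upwards [hfv, hfw, h0] with ω h1 h2 h3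
      linarith
  · rintro ⟨c, v, hv, hfv⟩
    refine le_antisymm (sSup_le ?_)
      (le_trans (b := (c : EReal)) (sInf_le ⟨c, rfl, v, hv, hfv.mono fun _ h => h.le⟩)
        (le_sSup ⟨c, rfl, v, hv, hfv.mono fun _ h => h.ge⟩))
    rintro _ ⟨c₁, rfl, v₁, hv₁, h₁⟩
    refine le_sInf ?_
    rintro _ ⟨c₂, rfl, v₂, hv₂, h₂⟩
    rw [EReal.coe_le_coe_iff]
    by_contra! hlt
    have hpos : 0 < (c₁ - c₂) * u := mul_pos (sub_pos.2 hlt) hu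
    have hge : ∀ᶠ ω in l, (c₁ - c₂) * u ≤ v₂ ω - v₁ ω := by
      filter_upwards [h₁, h₂] with ω h3 h4
      linarith
    obtain ⟨ω, h3, h4⟩ := (hge.and (hNA _ (hS.sub hv₂ hv₁)
      (hge.mono fun ω hω => hpos.le.trans hω))).exists
    linarith

/-- The σ-algebra on `Fin N × Ω` whose section at agent `i` is `F i`. -/
@[reducible] def collectiveSigma {Ω : Type*} {N : ℕ} (F : Fin N → MeasurableSpace Ω) :
    MeasurableSpace (Fin N × Ω) :=
  ⨅ i, (F i).map (Prod.mk i)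

lemma measurable_collectiveSigma_iff {Ω : Type*} {N : ℕ} {F : Fin N → MeasurableSpace Ω}
    {h : Fin N × Ω → ℝ} :
    Measurable[collectiveSigma F] h ↔ ∀ i, Measurable[F i] fun ω => h (i, ω) := by
  constructor
  · intro hh i s hs
    exact MeasurableSpace.measurableSet_iInf.1 (hh hs) i
  · intro hh s hs
    exact MeasurableSpace.measurableSet_iInf.2 fun i => hh i hs

lemma collectiveSigma_mono {Ω : Type*} {N : ℕ} {F G : Fin N → MeasurableSpace Ω}
    (h : ∀ i, F i ≤ G i) : collectiveSigma F ≤ collectiveSigma G :=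
  iInf_mono fun i _ hs => h i _ hs

/-- The sets of `Fin N × Ω` all of whose sections have full measure. -/
def collectiveAE {Ω : Type*} [MeasurableSpace Ω] (N : ℕ) (P : Measure Ω) :
    Filter (Fin N × Ω) :=
  ⨆ i : Fin N, map (Prod.mk i) (ae P)

lemma eventually_collectiveAE {Ω : Type*} [MeasurableSpace Ω] {N : ℕ} {P : Measure Ω}
    {p : Fin N × Ω → Prop} :
    (∀ᶠ q in collectiveAE N P, p q) ↔ ∀ i, ∀ᵐ ω ∂P, p (i, ω) := by
  simp [collectiveAE, eventually_iSup]

instance {Ω : Type*} [MeasurableSpace Ω] (N : ℕ) (P : Measure Ω) :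
    CountableInterFilter (collectiveAE N P) where
  countable_sInter_mem S hS h := by
    refine mem_iSup.2 fun i => ?_
    refine (countable_sInter_mem hS).2 fun s hs => ?_
    exact mem_iSup.1 (h s hs) i

/-- The random vectors `k + y` with `k i ∈ K i` and `y ∈ Y`, as functions on `Fin N × Ω`. -/
def collectiveGains {Ω : Type*} {N : ℕ} (K : Fin N → Set (Ω → ℝ)) (Y : Set (Fin N → Ω → ℝ)) :
    Set (Fin N × Ω → ℝ) :=
  { v | ∃ k : Fin N → Ω → ℝ, (∀ i, k i ∈ K i) ∧ ∃ y ∈ Y,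
      v = fun p => k p.1 p.2 + y p.1 p.2 }

/-- Price increments, zero-sum deterministic transfers and exchanges on `Fin N × Ω`. -/
noncomputable def collectiveGenerator {Ω : Type*} {J N R : ℕ} (assets : Fin N → Finset (Fin J))
    (X : Fin J → ℕ → Ω → ℝ) (Ys : Fin R → Fin N → Ω → ℝ) :
    (Fin J × ℕ) ⊕ (Fin N ⊕ Fin R) → Fin N × Ω → ℝ
  | .inl a, p => if a.1 ∈ assets p.1 then X a.1 a.2 p.2 - X a.1 (a.2 - 1) p.2 else 0
  | .inr (.inl i), p => (if i = p.1 then 1 else 0) - 1 / (N : ℝ)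
  | .inr (.inr r), p => Ys r p.1 p.2

/-- The position of a generator in the backward order of trading times. -/
def generatorGrade {J N R : ℕ} (T : ℕ) : (Fin J × ℕ) ⊕ (Fin N ⊕ Fin R) → ℕ
  | .inl a => T - a.2
  | .inr _ => T

/-- The collective information in backward time, trivial from `T` on. -/
@[reducible] def backwardChain {Ω : Type*} {N : ℕ} (F : Fin N → ℕ → MeasurableSpace Ω) (T t : ℕ) :
    MeasurableSpace (Fin N × Ω) :=
  if t < T then collectiveSigma fun i => F i (T - 1 - t) else ⊥

lemma backwardChain_antitone {Ω : Type*} {N : ℕ} {F : Fin N → ℕ → MeasurableSpace Ω}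
    (hF : ∀ i, Monotone (F i)) (T : ℕ) : Antitone (backwardChain F T) := by
  intro s t hst
  unfold backwardChain
  split_ifs with h1 h2
  · exact collectiveSigma_mono fun i => hF i (by omega)
  · omega
  · exact bot_le
  · exact le_rfl

theorem collectiveGains_eq_measurableSpan {Ω : Type*} {T J N R : ℕ} (hN : 1 ≤ N)
    (F : Fin N → ℕ → MeasurableSpace Ω) (X : Fin J → ℕ → Ω → ℝ)
    (assets : Fin N → Finset (Fin J)) (Ys : Fin R → Fin N → Ω → ℝ) :
    collectiveGains (fun i => gainsSet (F i) T (assets i) X) (spanExch Ys) =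
      measurableSpan (fun k => backwardChain F T (generatorGrade T k))
        (collectiveGenerator assets X Ys)
        ((Finset.univ ×ˢ Finset.Icc 1 T).disjSum Finset.univ) := by
  have hchain : ∀ s, 1 ≤ s → s ≤ T →
      backwardChain F T (T - s) = collectiveSigma fun i => F i (s - 1) := by
    intro s h1 h2
    rw [backwardChain, if_pos (by omega), show T - 1 - (T - s) = s - 1 by omega]
  have hN0 : (N : ℝ) ≠ 0 := by positivity
  have hsum : ∀ (H : Fin J × ℕ → ℝ) (x : Fin N → ℝ) (c : Fin R → ℝ) (p : Fin N × Ω),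
      ∑ k ∈ ((Finset.univ ×ˢ Finset.Icc 1 T).disjSum Finset.univ :
          Finset ((Fin J × ℕ) ⊕ (Fin N ⊕ Fin R))),
        Sum.elim H (Sum.elim x c) k * collectiveGenerator assets X Ys k p =
      (∑ j ∈ assets p.1, ∑ s ∈ Finset.Icc 1 T,
          H (j, s) * (X j s p.2 - X j (s - 1) p.2)) +
        ((x p.1 - (∑ i, x i) / N) + ∑ r, c r * Ys r p.1 p.2) := by
    intro H x c p
    rw [Finset.sum_disjSum, Fintype.sum_sum_type, Finset.sum_product]
    congr 1
    · simp only [Sum.elim_inl, collectiveGenerator]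
      refine (Finset.sum_subset_zero_on_sdiff (Finset.subset_univ _) (fun j hj => ?_)
        fun j hj => ?_).symm
      · simp [(Finset.mem_sdiff.1 hj).2]
      · simp [hj]
    · congr 1
      simp [collectiveGenerator, mul_sub, Finset.sum_sub_distrib, ← Finset.sum_mul,
        div_eq_mul_inv]
  ext v
  constructor
  · rintro ⟨k, hk, y, ⟨x, c, hx, hy⟩, rfl⟩
    choose H hH hkH using hk
    classical
    refine ⟨Sum.elim (fun a p => if a.1 ∈ assets p.1 then H p.1 a.1 a.2 p.2 else 0)
      (Sum.elim (fun i _ => x i) fun r _ => c r), ?_, ?_⟩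
    · rintro (⟨j, s⟩ | i | r) hmem
      · have hs : 1 ≤ s ∧ s ≤ T := by simpa using hmem
        change Measurable[backwardChain F T (T - s)] fun p : Fin N × Ω =>
          if j ∈ assets p.1 then H p.1 j s p.2 else 0
        rw [hchain s hs.1 hs.2, measurable_collectiveSigma_iff]
        intro i
        by_cases hj : j ∈ assets i
        · simpa [hj] using hH i j hj s hs.1 hs.2
        · simp [hj]
      · exact measurable_const
      · exact measurable_const
    · funext p
      refine Eq.trans ?_ ((hsum (fun a => if a.1 ∈ assets p.1 then H p.1 a.1 a.2 p.2 else 0)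
        x c p).symm.trans (Finset.sum_congr rfl fun k _ => ?_))
      · rw [hx, hkH, hy, zero_div, sub_zero]
        congr 1
        exact Finset.sum_congr rfl fun j hj => by simp [hj]
      · rcases k with a | i | r <;> rfl
  · rintro ⟨h, hh, rfl⟩
    have hconst : ∀ b : Fin N ⊕ Fin R, ∃ c : ℝ, h (.inr b) = fun _ => c := by
      intro b
      have := hh (.inr b) (by simp)
      change Measurable[backwardChain F T T] _ at this
      rw [backwardChain, if_neg (lt_irrefl T)] at this
      exact eq_const_of_measurable_bot this
    choose b hb using hconst
    refine ⟨fun i ω => ∑ j ∈ assets i, ∑ s ∈ Finset.Icc 1 T,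
        h (.inl (j, s)) (i, ω) * (X j s ω - X j (s - 1) ω),
      fun i => ⟨fun j s ω => h (.inl (j, s)) (i, ω), fun j _ s h1 h2 => ?_, rfl⟩,
      fun i ω => (b (.inl i) - (∑ i', b (.inl i')) / N) + ∑ r, b (.inr r) * Ys r i ω,
      ⟨fun i => b (.inl i) - (∑ i', b (.inl i')) / N, fun r => b (.inr r), ?_, fun _ => rfl⟩, ?_⟩
    · have := hh (.inl (j, s)) (by simp [h1, h2])
      change Measurable[backwardChain F T (T - s)] _ at this
      rw [hchain s h1 h2] at this
      exact measurable_collectiveSigma_iff.1 this i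
    · rw [Finset.sum_sub_distrib]
      simp
      field_simp
      simp
    · funext p
      rw [← hsum (fun a => h (.inl a) p) (fun i => b (.inl i)) (fun r => b (.inr r)) p]
      refine Finset.sum_congr rfl fun k _ => ?_
      rcases k with a | i | r <;> simp [hb]

lemma spanExch_add_zeroSum {Ω : Type*} {N R : ℕ} {Ys : Fin R → Fin N → Ω → ℝ}
    {y : Fin N → Ω → ℝ} (hy : y ∈ spanExch Ys) {x : Fin N → ℝ} (hx : ∑ i, x i = 0) :
    (fun i ω => x i + y i ω) ∈ spanExch Ys := by
  obtain ⟨x', c, hx', hy⟩ := hy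
  refine ⟨fun i => x i + x' i, c, by rw [Finset.sum_add_distrib, hx, hx', add_zero], fun i => ?_⟩
  funext ω
  simp only [hy]
  ring

lemma spanExch_neg {Ω : Type*} {N R : ℕ} {Ys : Fin R → Fin N → Ω → ℝ}
    {y : Fin N → Ω → ℝ} (hy : y ∈ spanExch Ys) : (fun i ω => -y i ω) ∈ spanExch Ys := by
  obtain ⟨x, c, hx, hy⟩ := hy
  refine ⟨fun i => -x i, fun r => -c r, by simp [hx], fun i => ?_⟩
  funext ω
  simp only [hy, neg_mul, Finset.sum_neg_distrib]
  ring

/-- Initial capitals may be redistributed equally by a zero-sum transfer. -/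
lemma exists_capital_iff {Ω : Type*} {N R : ℕ} (hN : 1 ≤ N) (K : Fin N → Set (Ω → ℝ))
    (Ys : Fin R → Fin N → Ω → ℝ) (c : ℝ) (p : (Fin N → Ω → ℝ) → Prop) :
    (∃ m : Fin N → ℝ, c = ∑ i, m i ∧ ∃ k : Fin N → Ω → ℝ, (∀ i, k i ∈ K i) ∧
      ∃ y ∈ spanExch Ys, p fun i ω => m i + k i ω + y i ω) ↔
    ∃ v ∈ collectiveGains K (spanExch Ys), p fun i ω => c * (1 / (N : ℝ)) + v (i, ω) := by
  have hN0 : (N : ℝ) ≠ 0 := by positivity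
  constructor
  · rintro ⟨m, rfl, k, hk, y, hy, hp⟩
    refine ⟨_, ⟨k, hk, _, spanExch_add_zeroSum hy
      (x := fun i => m i - (∑ i, m i) * (1 / (N : ℝ))) ?_, rfl⟩, ?_⟩
    · simp [Finset.sum_sub_distrib]
      field_simp
      simp
    · convert hp using 3
      ring
  · rintro ⟨_, ⟨k, hk, y, hy, rfl⟩, hp⟩
    refine ⟨fun _ => c * (1 / (N : ℝ)), ?_, k, hk, y, hy, ?_⟩
    · simp
      field_simp
    · convert hp using 3
      ring

/-- replicability iff equality of sub- and superhedging prices (Proposition prepcftap2). -/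
theorem replicable_iff_rho_eq
    {Ω : Type*} [m0 : MeasurableSpace Ω]
    (P : Measure Ω) [IsProbabilityMeasure P]
    (T J N : ℕ) (hT : 1 ≤ T) (hJ : 1 ≤ J) (hN : 1 ≤ N)
    (F : Fin N → ℕ → MeasurableSpace Ω)
    (hFmono : ∀ i, Monotone (F i))
    (hFle : ∀ i t, F i t ≤ m0)
    (hFzero : ∀ i, ∀ A : Set Ω, MeasurableSet[F i 0] A → P A = 0 ∨ P A = 1)
    (X : Fin J → ℕ → Ω → ℝ)
    (assets : Fin N → Finset (Fin J))
    (hassets : ∀ i, (assets i).Nonempty)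
    (hcover : ∀ j, ∃ i, j ∈ assets i)
    (hadapted : ∀ i, ∀ j ∈ assets i, ∀ t, t ≤ T → Measurable[F i t] (X j t))
    (R : ℕ) (Ys : Fin R → Fin N → Ω → ℝ)
    (hYsmeas : ∀ r i, Measurable[F i T] (Ys r i))
    (hNCA : NCA P (fun i => gainsSet (F i) T (assets i) X) (spanExch Ys))
    (f : Fin N → Ω → ℝ) (hfmeas : ∀ i, Measurable[F i T] (f i)) :
    Replicable P (fun i => gainsSet (F i) T (assets i) X) (spanExch Ys) f ↔
      rhoMinus P (fun i => gainsSet (F i) T (assets i) X) (spanExch Ys) f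
        = rhoPlus P (fun i => gainsSet (F i) T (assets i) X) (spanExch Ys) f := by
  set K : Fin N → Set (Ω → ℝ) := fun i => gainsSet (F i) T (assets i) X
  set L := collectiveGains K (spanExch Ys)
  have : NeBot (collectiveAE N P) := by
    refine ⟨fun h => ?_⟩
    have h0 : ∀ᶠ _ in collectiveAE N P, False := by rw [h]; trivial
    have := eventually_collectiveAE.1 h0 ⟨0, hN⟩
    simp [IsProbabilityMeasure.ne_zero P] at this
  have hNA : NoNonneg (collectiveAE N P) L := by
    rintro _ ⟨k, hk, y, hy, rfl⟩ hnn
    rw [eventually_collectiveAE] at hnn ⊢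
    exact hNCA k y hy hk hnn
  have hspan : L = _ := collectiveGains_eq_measurableSpan hN F X assets Ys
  obtain ⟨hcl, hst⟩ : DominatedClosed (collectiveAE N P) L ∧ StableModule ⊥ L := by
    rw [hspan] at hNA ⊢
    obtain ⟨h1, h2⟩ := measurableSpan_closed_stable _ (backwardChain_antitone hFmono T)
      (generatorGrade T) _ _ hNA
    refine ⟨h1, (h2 T ?_).mono bot_le⟩
    rintro (a | b) -
    · exact Nat.sub_le T a.2
    · exact le_rfl
  have key := sSup_subhedge_eq_sInf_superhedge_iff hst hcl hNA
    (u := 1 / (N : ℝ)) (by positivity) fun p => f p.1 p.2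
  simp only [eventually_collectiveAE] at key
  have hplus : rhoPlus P K (spanExch Ys) f = sInf { z : EReal | ∃ c : ℝ, z = c ∧
      ∃ v ∈ L, ∀ i, ∀ᵐ ω ∂P, f i ω ≤ c * (1 / (N : ℝ)) + v (i, ω) } := by
    unfold rhoPlus
    congr 1
    ext z
    constructor
    · rintro ⟨m, rfl, h⟩
      exact ⟨_, rfl, (exists_capital_iff hN K Ys _ fun v => ∀ i, ∀ᵐ ω ∂P, f i ω ≤ v i ω).1
        ⟨m, rfl, h⟩⟩
    · rintro ⟨c, rfl, h⟩
      obtain ⟨m, rfl, h'⟩ :=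
        (exists_capital_iff hN K Ys c fun v => ∀ i, ∀ᵐ ω ∂P, f i ω ≤ v i ω).2 h
      exact ⟨m, rfl, h'⟩
  have hminus : rhoMinus P K (spanExch Ys) f = sSup { z : EReal | ∃ c : ℝ, z = c ∧
      ∃ v ∈ L, ∀ i, ∀ᵐ ω ∂P, c * (1 / (N : ℝ)) + v (i, ω) ≤ f i ω } := by
    unfold rhoMinus
    congr 1
    ext z
    constructor
    · rintro ⟨m, rfl, k, hk, y, hy, h⟩
      exact ⟨_, rfl, (exists_capital_iff hN K Ys _ fun v => ∀ i, ∀ᵐ ω ∂P, v i ω ≤ f i ω).1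
        ⟨m, rfl, k, hk, _, spanExch_neg hy, by simpa only [sub_eq_add_neg] using h⟩⟩
    · rintro ⟨c, rfl, h⟩
      obtain ⟨m, rfl, k, hk, y, hy, h'⟩ :=
        (exists_capital_iff hN K Ys c fun v => ∀ i, ∀ᵐ ω ∂P, v i ω ≤ f i ω).2 h
      exact ⟨m, rfl, k, hk, _, spanExch_neg hy, by simpa only [sub_neg_eq_add] using h'⟩
  rw [hplus, hminus, key]
  constructor
  · rintro ⟨m, k, y, hy, hk, h⟩
    exact ⟨_, (exists_capital_iff hN K Ys _ fun v => ∀ i, ∀ᵐ ω ∂P, f i ω = v i ω).1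
      ⟨m, rfl, k, hk, y, hy, h⟩⟩
  · rintro ⟨c, h⟩
    obtain ⟨m, -, k, hk, y, hy, h'⟩ :=
      (exists_capital_iff hN K Ys c fun v => ∀ i, ∀ᵐ ω ∂P, f i ω = v i ω).2 h
    exact ⟨m, k, y, hy, hk, h'⟩

end CollectiveArb
end
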